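/- arXiv:1106.0082 — 3 statements merged into one kernel-verified Lean document; each statement's English description precedes it below -/
import Mathlib

section
/- Fix k ≥ 1. In the commutative ring R = ℤ[λ_1,…,λ_k][t, t^{−1}] of Laurent polynomials in t over ℤ[λ_1,…,λ_k], set λ₀ := −λ_1 − ⋯ − λ_k − t. Then for every tuple (n_0,…,n_k) ∈ ℤ≥0^{k+1} there exists a unique finitely supported family of integers (c^{n_0,…,n_k}_{m_0,…,m_k}), indexed by the tuples (m_0,…,m_k) ∈ ℤ≥0^{k+1} whose non-increasing rearrangement (μ_0,…,μ_k) satisfies μ_0 − μ_1 = 1, such that the identity λ₀^{n_0} λ_1^{n_1} ⋯ λ_k^{n_k} = Σ_{(m_0,…,m_k)} c^{n_0,…,n_k}_{m_0,…,m_k} · λ₀^{m_0} λ_1^{m_1} ⋯ λ_k^{m_k} · t^{Σ_i (n_i − m_i)} holds in R. -/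
/-- A tuple `(m_0,…,m_k)` of natural numbers whose non-increasing rearrangement
`(μ_0,…,μ_k)` satisfies `μ_0 − μ_1 = 1`. -/
def gapOne (k : ℕ) (m : Fin (k + 1) → ℕ) : Prop :=
  ∃ σ : Equiv.Perm (Fin (k + 1)), Antitone (fun j => m (σ j)) ∧ m (σ 0) = m (σ 1) + 1

/-- The variable `λ_a` in the ring `R = ℤ[λ_1,…,λ_k][t,t⁻¹]` of Laurent polynomials in
`t` over `ℤ[λ_1,…,λ_k]`. -/
noncomputable def lamL (k : ℕ) (a : Fin k) : LaurentPolynomial (MvPolynomial (Fin k) ℤ) :=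
  LaurentPolynomial.C (MvPolynomial.X a)

/-- The element `λ₀ = −λ_1 − ⋯ − λ_k − t` of `R = ℤ[λ_1,…,λ_k][t,t⁻¹]`. -/
noncomputable def lamLZero (k : ℕ) : LaurentPolynomial (MvPolynomial (Fin k) ℤ) :=
  -(∑ a : Fin k, lamL k a) - LaurentPolynomial.T 1

/-!
Put `y_i = λ_i / t`. Dividing by a power of `t`, the claim says that the monomials in
`y_0, …, y_k` whose exponent has a unit gap (`gapOne`) form a basis of the algebra generated by the
`y_i`. Since `y_1, …, y_k` are algebraically independent and `1 + ∑ y_i = 0`, this algebra is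
`ℤ[X_0, …, X_k]` modulo `1 + ∑ X_i`, so it suffices that the span of the unit-gap monomials is a
complement of the ideal `(1 + ∑ X_i)`.

The relation `X^m + ∑_l X^(m + e_l) = 0` rewrites every other monomial. If the maximum of `m` is
attained twice, solve for `X^m`: each `m + e_l` has a unit gap, or has the same maximum, still
attained twice, and larger degree. If the largest entry `m_i` leads by at least two, use the
relation at `m - e_i` and solve for `X^m`: all other monomials have smaller maximum.

For the trivial intersection, let `f ≠ 0` and suppose `f * (1 + ∑ X_i)` has only unit-gap monomials.
Among the exponents of `f` with the largest maximum `M`, let `m` have least degree, with `m_i = M`.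
The monomial `X^(m + e_i)` of the product comes from `X^m` alone, so `m + e_i` has a unit gap and
`M` is attained twice in `m`. Then `X^m` in the product also comes from `X^m` alone, as any
`m - e_l` would still have maximum `M`. But `m` has no unit gap.
-/

open Finset MvPolynomial

section UnitGap

variable {ι : Type*}

/-- The largest entry of `m` is attained exactly once and exceeds the second largest entry by one.
This extends `gapOne` to an arbitrary index type, with no sorting permutation: `i` and `j` are
positions of the two largest entries. -/
def HasUnitGap (m : ι → ℕ) : Prop :=
  ∃ i j, m i = m j + 1 ∧ ∀ l, l ≠ i → m l ≤ m j

theorem gapOne_iff_hasUnitGap {k : ℕ} {m : Fin (k + 1) → ℕ} : gapOne k m ↔ HasUnitGap m := by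
  have one_le_symm (σ : Equiv.Perm (Fin (k + 1))) {l} (hl : l ≠ σ 0) : 1 ≤ σ.symm l :=
    Fin.one_le_of_ne_zero fun h => hl (σ.symm_apply_eq.mp h)
  constructor
  · rintro ⟨σ, hσ, hgap⟩
    exact ⟨σ 0, σ 1, hgap, fun l hl => by simpa using hσ (one_le_symm σ hl)⟩
  · rintro ⟨i, j, hij, hle⟩
    obtain ⟨σ, hσ⟩ : ∃ σ : Equiv.Perm (Fin (k + 1)), Antitone fun l => m (σ l) :=
      ⟨Tuple.sort (OrderDual.toDual ∘ m), Tuple.monotone_sort (OrderDual.toDual ∘ m)⟩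
    have hσ0 : σ 0 = i := by
      by_contra hne
      have hi : m i ≤ m (σ 0) := by simpa using hσ (Fin.zero_le (σ.symm i))
      have := hle _ hne
      omega
    have hji : j ≠ i := by rintro rfl; omega
    obtain _ | k := k
    · exact absurd (Subsingleton.elim (α := Fin 1) j i) hji
    have hσ1 : σ 1 ≠ i := hσ0 ▸ σ.injective.ne one_ne_zero
    have hj : m j ≤ m (σ 1) := by simpa using hσ (one_le_symm σ (hσ0 ▸ hji))
    have := hle _ hσ1
    exact ⟨σ, hσ, by rw [hσ0]; omega⟩

theorem not_hasUnitGap_of_max_attained_twice {m : ι → ℕ} {i j : ι} (hij : i ≠ j)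
    (hi : ∀ l, m l ≤ m i) (hj : m j = m i) : ¬ HasUnitGap m := by
  rintro ⟨a, b, hab, hle⟩
  have := hi a
  rcases eq_or_ne i a with rfl | hia
  · have := hle j hij.symm
    omega
  · have := hle i hia
    omega

theorem hasUnitGap_add_single_of_max_attained_twice {m : ι →₀ ℕ} {i j : ι} (hij : i ≠ j)
    (hi : ∀ l, m l ≤ m i) (hj : m j = m i) : HasUnitGap (m + Finsupp.single i 1 : ι →₀ ℕ) := by
  refine ⟨i, j, by simp [hij, hj], fun l hl => ?_⟩
  simpa [hl.symm, hij, hj] using hi l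

theorem max_attained_twice_of_hasUnitGap_add_single {m : ι →₀ ℕ} {i : ι} (hi : ∀ l, m l ≤ m i)
    (h : HasUnitGap (m + Finsupp.single i 1 : ι →₀ ℕ)) : ∃ j, j ≠ i ∧ m j = m i := by
  classical
  obtain ⟨a, b, hab, hle⟩ := h
  simp only [Finsupp.add_apply, Finsupp.single_apply] at hab hle
  obtain rfl : a = i := by grind
  exact ⟨b, by grind, by grind⟩

theorem exists_max_entry_min_degree [Finite ι] [Nonempty ι] {S : Finset (ι →₀ ℕ)}
    (hS : S.Nonempty) :
    ∃ m ∈ S, ∃ i, (∀ q ∈ S, ∀ l, q l ≤ m i) ∧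
      ∀ q ∈ S, (∃ l, q l = m i) → m.degree ≤ q.degree := by
  classical
  have := Fintype.ofFinite ι
  obtain ⟨⟨p, i⟩, hp, hmax⟩ := (S ×ˢ univ).exists_max_image (fun q => q.1 q.2)
    (hS.product univ_nonempty)
  obtain ⟨m, hm, hmin⟩ := exists_min_image {q ∈ S | ∃ l, q l = p i} Finsupp.degree
    ⟨p, mem_filter.mpr ⟨(mem_product.mp hp).1, i, rfl⟩⟩
  obtain ⟨hmS, i', hi'⟩ := mem_filter.mp hm
  refine ⟨m, hmS, i', fun q hq l => ?_, fun q hq hl => hmin q (mem_filter.mpr ⟨hq, hi' ▸ hl⟩)⟩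
  exact hi' ▸ hmax (q, l) (mem_product.mpr ⟨hq, mem_univ l⟩)

variable {p : (ι →₀ ℕ) → Prop}

theorem HasUnitGap.induction_of_max_attained_twice [Finite ι]
    (hgap : ∀ m : ι →₀ ℕ, HasUnitGap m → p m)
    (hdown : ∀ m, (∀ l, p (m + Finsupp.single l 1)) → p m) {i j : ι} (hij : i ≠ j) (m : ι →₀ ℕ)
    (hi : ∀ l, m l ≤ m i) (hj : m j = m i) : p m := by
  classical
  have := Fintype.ofFinite ι
  induction hd : ∑ l, (m i - m l) using Nat.strong_induction_on generalizing m with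
  | _ d ih =>
  refine hdown m fun l => ?_
  rcases (hi l).lt_or_eq with hlt | heq
  · have hil : i ≠ l := by rintro rfl; exact hlt.false
    have hjl : j ≠ l := by rintro rfl; omega
    refine ih _ ?_ (m + Finsupp.single l 1) (fun b => ?_) (by simp [hil.symm, hjl.symm, hj]) rfl
    · rw [← hd]
      refine sum_lt_sum (fun b _ => ?_) ⟨l, mem_univ l, ?_⟩
      all_goals simp only [Finsupp.add_apply, Finsupp.single_apply]; grind
    · rcases eq_or_ne b l with rfl | hb
      · simpa [hil.symm] using hlt
      · simpa [hil.symm, hb.symm] using hi b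
  · obtain ⟨b, hlb, hb⟩ : ∃ b, l ≠ b ∧ m b = m i := by
      rcases eq_or_ne l i with rfl | hli
      exacts [⟨j, hij, hj⟩, ⟨i, hli, rfl⟩]
    exact hgap _ (hasUnitGap_add_single_of_max_attained_twice hlb (heq ▸ hi) (hb.trans heq.symm))

theorem HasUnitGap.induction [Finite ι] [Nontrivial ι]
    (hgap : ∀ m : ι →₀ ℕ, HasUnitGap m → p m)
    (hdown : ∀ m, (∀ l, p (m + Finsupp.single l 1)) → p m)
    (hup : ∀ m i, p m → (∀ l, l ≠ i → p (m + Finsupp.single l 1)) → p (m + Finsupp.single i 1))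
    (m : ι →₀ ℕ) : p m := by
  classical
  obtain ⟨i, hi⟩ := Finite.exists_max m
  induction hM : m i using Nat.strong_induction_on generalizing m i with
  | _ M ih =>
  have : Nonempty {l // l ≠ i} := nonempty_subtype.mpr (exists_ne i)
  obtain ⟨⟨j, hji⟩, hj⟩ := Finite.exists_max fun l : {l // l ≠ i} => m l
  simp only [Subtype.forall] at hj
  have ih' (q : ι →₀ ℕ) (hq : ∀ l, q l < M) : p q := by
    obtain ⟨a, ha⟩ := Finite.exists_max q
    exact ih _ (hq a) q a ha rfl
  obtain hlt | heq | heq : m j + 1 < m i ∨ m i = m j + 1 ∨ m j = m i := by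
    have := hi j
    omega
  · obtain ⟨q, rfl⟩ : ∃ q, m = q + Finsupp.single i 1 :=
      ⟨m - Finsupp.single i 1, (tsub_add_cancel_of_le (Finsupp.single_le_iff.mpr (by omega))).symm⟩
    simp only [Finsupp.add_apply, Finsupp.single_apply] at hM hj hlt
    have hq (l) (hl : l ≠ i) : q l + 1 < q i + 1 := by grind
    refine hup q i (ih' q fun l => ?_) fun l hl => ih' _ fun b => ?_
    · grind
    · simp only [Finsupp.add_apply, Finsupp.single_apply]
      grind
  · exact hgap m ⟨i, j, heq, hj⟩
  · exact HasUnitGap.induction_of_max_attained_twice hgap hdown hji.symm m hi heq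

end UnitGap

section Product

variable {R ι : Type*} [CommSemiring R] [Fintype ι]

theorem coeff_mul_one_add_sum_X [DecidableEq ι] (f : MvPolynomial ι R) (m : ι →₀ ℕ) :
    coeff m (f * (1 + ∑ i, X i)) =
      coeff m f + ∑ i, if i ∈ m.support then coeff (m - Finsupp.single i 1) f else 0 := by
  simp only [mul_add, mul_one, coeff_add, mul_sum, coeff_sum, coeff_mul_X']

theorem monomial_mul_one_add_sum_X (m : ι →₀ ℕ) (r : R) :
    monomial m r * (1 + ∑ i, X i) =
      monomial m r + ∑ i, monomial (m + Finsupp.single i 1) r := by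
  simp only [mul_add, mul_one, mul_sum, X, monomial_mul]

theorem coeff_add_single_mul_one_add_sum_X {f : MvPolynomial ι R} {m : ι →₀ ℕ} {i : ι}
    (hi : ∀ q ∈ f.support, q i ≤ m i) :
    coeff (m + Finsupp.single i 1) (f * (1 + ∑ l, X l)) = coeff m f := by
  classical
  have hzero {q : ι →₀ ℕ} (hq : m i < q i) : coeff q f = 0 :=
    notMem_support_iff.mp fun h => (hi q h).not_gt hq
  rw [coeff_mul_one_add_sum_X, hzero (by simp), zero_add, sum_eq_single i]
  · simp
  · intro l _ hl
    rw [hzero (by simp [hl]), ite_self]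
  · simp

/-- The polynomials all of whose exponents have a unit gap: the normal forms modulo
`1 + ∑ i, X i`. -/
noncomputable abbrev unitGapSubmodule (R ι : Type*) [CommSemiring R] :
    Submodule R (MvPolynomial ι R) :=
  restrictSupport R {m | HasUnitGap m}

theorem eq_zero_of_mul_mem_unitGapSubmodule [Nonempty ι] {f : MvPolynomial ι R}
    (h : f * (1 + ∑ i, X i) ∈ unitGapSubmodule R ι) : f = 0 := by
  classical
  have hgap {m} (hm : coeff m (f * (1 + ∑ i, X i)) ≠ 0) : HasUnitGap m :=
    (mem_restrictSupport_iff R).mp h (mem_support_iff.mpr hm)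
  by_contra hf
  obtain ⟨m, hmf, i, hle, hmin⟩ := exists_max_entry_min_degree (support_nonempty.mpr hf)
  obtain ⟨j, hji, hj⟩ : ∃ j, j ≠ i ∧ m j = m i := by
    refine max_attained_twice_of_hasUnitGap_add_single (hle m hmf) (hgap ?_)
    rwa [coeff_add_single_mul_one_add_sum_X fun q hq => hle q hq i, ← mem_support_iff]
  refine not_hasUnitGap_of_max_attained_twice hji.symm (hle m hmf) hj (hgap ?_)
  rwa [coeff_mul_one_add_sum_X, sum_eq_zero, add_zero, ← mem_support_iff]
  intro l _
  refine ite_eq_right_iff.mpr fun hl => notMem_support_iff.mp fun hq => ?_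
  have hmax : ∃ b, (m - Finsupp.single l 1 : ι →₀ ℕ) b = m i := by
    rcases eq_or_ne l i with rfl | hli
    · exact ⟨j, by simp [hji.symm, hj]⟩
    · exact ⟨i, by simp [hli]⟩
  have hdeg : (m - Finsupp.single l 1).degree + 1 = m.degree := by
    have hcancel : m - Finsupp.single l 1 + Finsupp.single l 1 = m :=
      tsub_add_cancel_of_le (by simpa [Nat.one_le_iff_ne_zero] using hl)
    simpa only [map_add, Finsupp.degree_single] using congrArg Finsupp.degree hcancel
  have := hmin _ hq hmax
  omega

end Product

section Complement

variable {R ι : Type*} [CommRing R] [Fintype ι]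

theorem unitGapSubmodule_sup_span_eq_top [Nontrivial ι] :
    unitGapSubmodule R ι ⊔ (Ideal.span {1 + ∑ i, X i}).restrictScalars R = ⊤ := by
  classical
  set N := unitGapSubmodule R ι ⊔ (Ideal.span {1 + ∑ i, X i}).restrictScalars R
  have hrel (m : ι →₀ ℕ) (r : R) :
      monomial m r + ∑ i, monomial (m + Finsupp.single i 1) r ∈ N := by
    rw [← monomial_mul_one_add_sum_X]
    exact Submodule.mem_sup_right (Ideal.mul_mem_left _ _ (Ideal.mem_span_singleton_self _))
  have hmonomial (m : ι →₀ ℕ) (r : R) : monomial m r ∈ N := by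
    induction m using HasUnitGap.induction with
    | hgap m hm =>
      exact Submodule.mem_sup_left ((monomial_mem_restrictSupport R).mpr (Or.inl hm))
    | hdown m hm =>
      exact (N.add_mem_iff_left (N.sum_mem fun l _ => hm l)).mp (hrel m r)
    | hup m i hm hl =>
      have h := (N.add_mem_iff_right hm).mp (hrel m r)
      rw [← add_sum_erase _ _ (mem_univ i)] at h
      exact (N.add_mem_iff_left (N.sum_mem fun l hl' => hl l (ne_of_mem_erase hl'))).mp h
  refine Submodule.eq_top_iff'.mpr fun f => ?_
  rw [f.as_sum]
  exact N.sum_mem fun m _ => hmonomial m _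

theorem isCompl_unitGapSubmodule_span [Nontrivial ι] :
    IsCompl (unitGapSubmodule R ι) ((Ideal.span {1 + ∑ i, X i}).restrictScalars R) := by
  refine ⟨Submodule.disjoint_def.mpr fun P hP hPI => ?_,
    codisjoint_iff.mpr unitGapSubmodule_sup_span_eq_top⟩
  obtain ⟨f, rfl⟩ := Ideal.mem_span_singleton'.mp hPI
  rw [eq_zero_of_mul_mem_unitGapSubmodule hP, zero_mul]

end Complement

section MonomialExpansion

variable {R B ι : Type*} [CommSemiring R] [CommSemiring B] [Algebra R B]

/-- The monomial basis of a polynomial ring in finitely many variables, indexed by `ι → ℕ` instead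
of `ι →₀ ℕ` so that coefficient families can be compared with those of `stmt_15`. -/
noncomputable def monomialBasis (R ι : Type*) [CommSemiring R] [Finite ι] :
    Module.Basis (ι → ℕ) R (MvPolynomial ι R) :=
  (basisMonomials ι R).reindex Finsupp.equivFunOnFinite

theorem aeval_monomialBasis [Fintype ι] (y : ι → B) (m : ι → ℕ) :
    aeval y (monomialBasis R ι m) = ∏ i, y i ^ m i := by
  simp [monomialBasis, aeval_monomial, Finsupp.prod_fintype]

theorem aeval_monomialBasis_repr_symm [Fintype ι] (y : ι → B) (c : (ι → ℕ) →₀ R) :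
    aeval y ((monomialBasis R ι).repr.symm c) = c.sum fun m r => r • ∏ i, y i ^ m i := by
  simp only [Module.Basis.repr_symm_apply, Finsupp.linearCombination_apply, Finsupp.sum, map_sum,
    map_smul, aeval_monomialBasis]

theorem monomialBasis_repr_symm_mem_unitGapSubmodule [Finite ι] (c : (ι → ℕ) →₀ R) :
    (monomialBasis R ι).repr.symm c ∈ unitGapSubmodule R ι ↔ ∀ m, ¬ HasUnitGap m → c m = 0 := by
  have hcoeff (m : ι →₀ ℕ) : coeff m ((monomialBasis R ι).repr.symm c) = c m := by
    conv_rhs => rw [← (monomialBasis R ι).repr.apply_symm_apply c]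
    rw [monomialBasis, Module.Basis.repr_reindex_apply]
    rfl
  rw [mem_restrictSupport_iff, ← Finsupp.equivFunOnFinite.forall_congr_right]
  simp only [Set.subset_def, mem_coe, mem_support_iff, hcoeff, Set.mem_ofPred_eq, not_imp_comm,
    ne_eq]
  rfl

theorem prod_pow_eq_prod_mul_inv_pow_mul_zpow {M : Type*} [CommMonoid M] [Fintype ι]
    (x : ι → M) (t : Mˣ) (m : ι → ℕ) :
    ∏ i, x i ^ m i = (∏ i, (x i * ↑t⁻¹) ^ m i) * ↑(t ^ ∑ i, (m i : ℤ)) := by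
  have hzpow : ((t ^ ∑ i, (m i : ℤ) : Mˣ) : M) = ∏ i, (t : M) ^ m i := by
    rw [← Nat.cast_sum, zpow_natCast, Units.val_pow_eq_pow_val, prod_pow_eq_pow_sum]
  simp only [hzpow, ← prod_mul_distrib, ← mul_pow, Units.inv_mul_cancel_right]

theorem prod_pow_eq_sum_iff_sum_mul_inv_eq [Fintype ι] (x : ι → B) (t : Bˣ) (n : ι → ℕ)
    (c : (ι → ℕ) →₀ R) :
    (∏ i, x i ^ n i = c.sum fun m r =>
        r • ((∏ i, x i ^ m i) * ↑(t ^ ∑ i, ((n i : ℤ) - (m i : ℤ))))) ↔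
      (c.sum fun m r => r • ∏ i, (x i * ↑t⁻¹) ^ m i) = ∏ i, (x i * ↑t⁻¹) ^ n i := by
  have hterm (m : ι → ℕ) : (∏ i, x i ^ m i) * ↑(t ^ ∑ i, ((n i : ℤ) - (m i : ℤ))) =
      (∏ i, (x i * ↑t⁻¹) ^ m i) * ↑(t ^ ∑ i, (n i : ℤ)) := by
    rw [prod_pow_eq_prod_mul_inv_pow_mul_zpow x t m, mul_assoc, ← Units.val_mul, ← zpow_add,
      sum_sub_distrib, add_sub_cancel]
  simp only [hterm, ← smul_mul_assoc, Finsupp.sum, ← sum_mul]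
  rw [prod_pow_eq_prod_mul_inv_pow_mul_zpow x t n, Units.mul_left_inj, eq_comm]

end MonomialExpansion

section Evaluation

variable {R B : Type*} [CommRing R] [CommRing B] [Algebra R B]

theorem ker_aeval_eq_span_one_add_sum_X {k : ℕ} {y : Fin (k + 1) → B} (hsum : ∑ i, y i = -1)
    (hy : AlgebraicIndependent R (Fin.tail y)) :
    RingHom.ker (aeval y : MvPolynomial (Fin (k + 1)) R →ₐ[R] B) =
      Ideal.span {1 + ∑ i, X i} := by
  set I : Ideal (MvPolynomial (Fin (k + 1)) R) := Ideal.span {1 + ∑ i, X i} with hI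
  refine le_antisymm (fun P hP => ?_) ?_
  · let elim : MvPolynomial (Fin (k + 1)) R →ₐ[R] MvPolynomial (Fin k) R :=
      aeval (Fin.cons (-1 - ∑ a, X a) X)
    have elim_spec : (Ideal.Quotient.mkₐ R I).comp ((rename Fin.succ).comp elim) =
        Ideal.Quotient.mkₐ R I := by
      ext i
      refine Fin.cases ?_ (fun a => by simp [elim]) i
      refine (Ideal.Quotient.mk_eq_mk_iff_sub_mem _ _).mpr ?_
      rw [← neg_mem_iff]
      convert Ideal.mem_span_singleton_self (1 + ∑ i, X i) using 1
      simp only [aeval_eq_bind₁, RingHom.coe_coe, AlgHom.coe_comp, Function.comp_apply,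
        bind₁_X_right, Fin.cons_zero, map_sub, map_neg, map_one, map_sum, rename_X, neg_sub,
        Fin.sum_univ_succ, elim]
      ring
    have aeval_elim : (aeval (Fin.tail y)).comp elim = aeval y := by
      ext i
      refine Fin.cases ?_ (fun a => by simp [elim, Fin.tail]) i
      rw [Fin.sum_univ_succ] at hsum
      simp [elim, Fin.tail, ← hsum]
    have elim_P : elim P = 0 := hy.eq_zero_of_aeval_eq_zero _ <| by
      rwa [← AlgHom.comp_apply, aeval_elim]
    rw [← Ideal.Quotient.eq_zero_iff_mem, ← Ideal.Quotient.mkₐ_eq_mk R, ← elim_spec]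
    simp [elim_P]
  · simp [hI, RingHom.mem_ker, hsum]

theorem existsUnique_mem_unitGapSubmodule_aeval_eq {k : ℕ} (hk : 1 ≤ k) {y : Fin (k + 1) → B}
    (hsum : ∑ i, y i = -1) (hy : AlgebraicIndependent R (Fin.tail y))
    (Q : MvPolynomial (Fin (k + 1)) R) :
    ∃! P, P ∈ unitGapSubmodule R (Fin (k + 1)) ∧ aeval y P = aeval y Q := by
  have : Nontrivial (Fin (k + 1)) := Fin.nontrivial_iff_two_le.mpr (by omega)
  have hcompl := isCompl_unitGapSubmodule_span (R := R) (ι := Fin (k + 1))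
  rw [← ker_aeval_eq_span_one_add_sum_X hsum hy] at hcompl
  obtain ⟨P, hP, K, hK, rfl⟩ :=
    Submodule.mem_sup.mp (hcompl.sup_eq_top ▸ Submodule.mem_top (x := Q))
  have hK : aeval y K = 0 := hK
  refine ⟨P, ⟨hP, by simp [hK]⟩, fun P' ⟨hP', h⟩ => sub_eq_zero.mp ?_⟩
  refine Submodule.disjoint_def.mp hcompl.disjoint _ (Submodule.sub_mem _ hP' hP) ?_
  simp [RingHom.mem_ker, h, hK]

theorem stmt_15_general {k : ℕ} (hk : 1 ≤ k) {lam : Fin (k + 1) → B} {t : Bˣ}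
    (hsum : ∑ i, lam i + t = 0)
    (hindep : AlgebraicIndependent R fun a : Fin k => lam a.succ * ↑t⁻¹) (n : Fin (k + 1) → ℕ) :
    ∃! c : (Fin (k + 1) → ℕ) →₀ R,
      (∀ m, ¬ gapOne k m → c m = 0) ∧
      ∏ i, lam i ^ n i = c.sum fun m r =>
        r • ((∏ i, lam i ^ m i) * ↑(t ^ ∑ i, ((n i : ℤ) - (m i : ℤ)))) := by
  have hsum' : ∑ i, lam i * ↑t⁻¹ = -1 := by
    rw [← sum_mul, eq_neg_of_add_eq_zero_left hsum, neg_mul, Units.mul_inv]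
  refine ((monomialBasis R (Fin (k + 1))).repr.symm.toEquiv.existsUnique_congr fun c => ?_).mpr
    (existsUnique_mem_unitGapSubmodule_aeval_eq hk hsum' hindep (monomialBasis R _ n))
  simp only [LinearEquiv.coe_toEquiv, monomialBasis_repr_symm_mem_unitGapSubmodule,
    aeval_monomialBasis_repr_symm, aeval_monomialBasis, gapOne_iff_hasUnitGap,
    prod_pow_eq_sum_iff_sum_mul_inv_eq]

end Evaluation

section LaurentPolynomial

open LaurentPolynomial

/-- The variable of a Laurent polynomial ring as a unit, the role of `t` in `stmt_15_general`. -/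
noncomputable def unitT (R : Type*) [Semiring R] : R[T;T⁻¹]ˣ where
  val := T 1
  inv := T (-1)
  val_inv := by rw [← T_add, add_neg_cancel, T_zero]
  inv_val := by rw [← T_add, neg_add_cancel, T_zero]

theorem val_unitT_zpow {R : Type*} [Semiring R] (n : ℤ) :
    ((unitT R ^ n : R[T;T⁻¹]ˣ) : R[T;T⁻¹]) = T n := by
  induction n using Int.induction_on with
  | zero => simp
  | succ n ih => rw [zpow_add_one, Units.val_mul, ih, T_add]; rfl
  | pred n ih => rw [zpow_sub_one, Units.val_mul, ih, T_sub]; rfl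

theorem algebraicIndependent_lamL_mul_inv (k : ℕ) :
    AlgebraicIndependent ℤ fun a => lamL k a * ↑(unitT (MvPolynomial (Fin k) ℤ))⁻¹ := by
  let evalOne : LaurentPolynomial (MvPolynomial (Fin k) ℤ) →+* MvPolynomial (Fin k) ℤ :=
    LaurentPolynomial.eval₂ (RingHom.id _) 1
  have evalOne_comp :
      (evalOne.toIntAlgHom ∘ fun a => lamL k a * ↑(unitT (MvPolynomial (Fin k) ℤ))⁻¹) = X := by
    ext1 a
    change evalOne (LaurentPolynomial.C (X a) * T (-1)) = X a
    simp [evalOne]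
  exact .of_comp evalOne.toIntAlgHom (evalOne_comp ▸ algebraicIndependent_X (Fin k) ℤ)

end LaurentPolynomial

/-- Fix `k ≥ 1` and work in `R = ℤ[λ_1,…,λ_k][t,t⁻¹]` with `λ₀ = −λ_1 − ⋯ − λ_k − t`.
For every tuple `(n_0,…,n_k) ∈ ℤ≥0^{k+1}` there is a unique finitely supported family of
integers `c`, indexed by the tuples `(m_0,…,m_k)` whose non-increasing rearrangement
satisfies `μ_0 − μ_1 = 1`, such that
`λ₀^{n_0} λ_1^{n_1} ⋯ λ_k^{n_k}
  = Σ_m c_m · λ₀^{m_0} λ_1^{m_1} ⋯ λ_k^{m_k} · t^{Σ_i (n_i − m_i)}` in `R`. -/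
theorem stmt_15 (k : ℕ) (hk : 1 ≤ k) (n : Fin (k + 1) → ℕ) :
    ∃! c : (Fin (k + 1) → ℕ) →₀ ℤ,
      (∀ m, ¬ gapOne k m → c m = 0) ∧
      lamLZero k ^ n 0 * ∏ a : Fin k, lamL k a ^ n a.succ
        = c.sum fun m cm =>
            cm • (lamLZero k ^ m 0 * (∏ a : Fin k, lamL k a ^ m a.succ)
              * LaurentPolynomial.T (∑ i : Fin (k + 1), ((n i : ℤ) - (m i : ℤ)))) := by
  have hsum : ∑ i, (Fin.cons (lamLZero k) (lamL k) : Fin (k + 1) → _) i +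
      (unitT (MvPolynomial (Fin k) ℤ) : LaurentPolynomial _) = 0 := by
    simp only [lamLZero, Fin.sum_univ_succ, Fin.cons_zero, Fin.cons_succ, unitT]
    ring
  simpa only [Fin.prod_univ_succ, Fin.cons_zero, Fin.cons_succ, val_unitT_zpow] using
    stmt_15_general hk hsum (algebraicIndependent_lamL_mul_inv k) n
end

section
/- Fix k ≥ 1. In the commutative polynomial ring ℤ[λ_1,…,λ_k, t], set λ₀ := −λ_1 − ⋯ − λ_k − t. Then for every tuple (n_0,…,n_k) ∈ ℤ≥0^{k+1} there exists a finitely supported family of integers (b^{n_0,…,n_k}_{m_0,…,m_k}), indexed by tuples (m_0,…,m_k) ∈ ℤ≥0^{k+1} whose non-increasing rearrangement (μ_0,…,μ_k) satisfies μ_0 − μ_1 ∈ {0,1}, such that: (1) λ₀^{n_0} λ_1^{n_1} ⋯ λ_k^{n_k} = Σ_{(m_0,…,m_k)} b^{n_0,…,n_k}_{m_0,…,m_k} · λ₀^{m_0} λ_1^{m_1} ⋯ λ_k^{m_k} · t^{Σ_i(n_i − m_i)} in ℤ[λ_1,…,λ_k, t]; (2) for every index α with n_α = ν_0 (where (ν_0,…,ν_k)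 is the non-increasing rearrangement of (n_0,…,n_k)), the coefficient b^{n_0,…,n_k}_{m_0,…,m_k} is zero unless m_α = μ_0 ≤ ν_0, m_β ≥ n_β for every β ≠ α, and Σ_i(n_i − m_i) ≥ 0; in particular, if μ_0 = ν_0 then b^{n_0,…,n_k}_{m_0,…,m_k} is zero unless m_i = n_i for every i = 0,…,k. -/
/-- A tuple `(m_0,…,m_k)` of natural numbers whose non-increasing rearrangement
`(μ_0,…,μ_k)` satisfies `μ_0 − μ_1 ∈ {0,1}`. -/
def gapLeOne (k : ℕ) (m : Fin (k + 1) → ℕ) : Prop :=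
  ∃ σ : Equiv.Perm (Fin (k + 1)), Antitone (fun j => m (σ j)) ∧ m (σ 0) ≤ m (σ 1) + 1

/-- The variable `λ_a` in the polynomial ring `ℤ[λ_1,…,λ_k,t]`, realized as
`MvPolynomial (Option (Fin k)) ℤ` with `t` the variable `none`. -/
noncomputable def lamP (k : ℕ) (a : Fin k) : MvPolynomial (Option (Fin k)) ℤ :=
  MvPolynomial.X (some a)

/-- The variable `t` of `ℤ[λ_1,…,λ_k,t]`. -/
noncomputable def tP (k : ℕ) : MvPolynomial (Option (Fin k)) ℤ :=
  MvPolynomial.X none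

/-- The element `λ₀ = −λ_1 − ⋯ − λ_k − t` of `ℤ[λ_1,…,λ_k,t]`. -/
noncomputable def lamPZero (k : ℕ) : MvPolynomial (Option (Fin k)) ℤ :=
  -(∑ a : Fin k, lamP k a) - tP k

/-!
Call `α` a peak of `n` if `n α` exceeds every other entry by at least two; `n` is balanced when it
has no peak. If `α` is a peak of `n = a + e_α`, then replacing one factor `x α` of `x ^ n` by
`-(∑ β ≠ α, x β) - t` writes `x ^ n` through the monomials `x ^ (a + e_β)`, `β ≠ α`, and
`t * x ^ a`. Since `α` is a peak, it is still a maximal index of `a` and of every `a + e_β`; its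
entry has dropped by one and no other entry has decreased. So condition (2) holds for this single
step, and the relation it imposes between exponents is transitive. The largest entry drops in each
step, so the rewriting terminates, necessarily at balanced exponents.
-/

open Finset

/-- For tuples with at least two entries, the two largest entries differ by at most one. This is
the condition `μ_0 - μ_1 ∈ {0, 1}`, expressed without sorting; a one-entry tuple is never
balanced. -/
def IsBalanced {ι : Type*} (m : ι → ℕ) : Prop :=
  ∀ α, ∃ β ≠ α, m α ≤ m β + 1

theorem IsBalanced.gapLeOne {k : ℕ} {m : Fin (k + 1) → ℕ} (hm : IsBalanced m) :
    gapLeOne k m := by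
  have hsort := Tuple.monotone_sort (fun i => OrderDual.toDual (m i))
  set σ := Tuple.sort (fun i => OrderDual.toDual (m i))
  have hanti : Antitone (fun j => m (σ j)) := fun i j hij => hsort hij
  obtain ⟨β, hβ, hle⟩ := hm (σ 0)
  obtain ⟨j, rfl⟩ := σ.surjective β
  have hj : 1 ≤ j := Fin.one_le_of_ne_zero (ne_of_apply_ne σ hβ)
  exact ⟨σ, hanti, hle.trans (Nat.add_le_add_right (hanti hj) 1)⟩

section Peak

variable {ι : Type*} [DecidableEq ι] {n a : ι → ℕ} {α : ι}

theorem add_single_one_lt_apex (ha : ∀ r, r ≠ α → a r < a α) (r : ι) (hr : r ≠ α) :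
    (a + Pi.single α 1 : ι → ℕ) r < (a + Pi.single α 1 : ι → ℕ) α := by
  simpa [hr] using (ha r hr).trans (Nat.lt_succ_self _)

theorem exists_eq_add_single_of_not_isBalanced [Nontrivial ι] (hn : ¬ IsBalanced n) :
    ∃ (a : ι → ℕ) (α : ι), (∀ r, r ≠ α → a r < a α) ∧ n = a + Pi.single α 1 := by
  simp only [IsBalanced, not_forall, not_exists, not_and, not_le] at hn
  obtain ⟨α, hα⟩ := hn
  obtain ⟨β, hβ⟩ := exists_ne α
  have hpos : Pi.single α 1 ≤ n := fun r => by
    obtain rfl | hr := eq_or_ne r α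
    · simpa using Nat.one_le_of_lt (hα β hβ)
    · simp [hr]
  refine ⟨n - Pi.single α 1, α, fun r hr => ?_, (tsub_add_cancel_of_le hpos).symm⟩
  simpa [hr] using Nat.lt_sub_of_add_lt (hα r hr)

end Peak

section Flattening

variable {ι : Type*} [Fintype ι] {n n' m a : ι → ℕ} {α β : ι}

/-- The relation between the exponent `n` of a monomial and the exponents `m` occurring in its
expansion: the degree does not increase, and at each maximal index `α` of `n` the tuple `m` is
still maximal, with `m α ≤ n α`, while no other entry has decreased. -/
structure IsFlattening (n m : ι → ℕ) : Prop where
  sum_le : ∑ i, m i ≤ ∑ i, n i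
  isMax : ∀ α, (∀ r, n r ≤ n α) → ∀ r, m r ≤ m α
  apex_le : ∀ α, (∀ r, n r ≤ n α) → m α ≤ n α
  le_of_ne : ∀ α, (∀ r, n r ≤ n α) → ∀ β, β ≠ α → n β ≤ m β

namespace IsFlattening

protected theorem refl (n : ι → ℕ) : IsFlattening n n :=
  ⟨le_rfl, fun _ hα => hα, fun _ _ => le_rfl, fun _ _ _ _ => le_rfl⟩

protected theorem trans (h : IsFlattening n n') (h' : IsFlattening n' m) : IsFlattening n m where
  sum_le := h'.sum_le.trans h.sum_le
  isMax α hα := h'.isMax α (h.isMax α hα)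
  apex_le α hα := (h'.apex_le α (h.isMax α hα)).trans (h.apex_le α hα)
  le_of_ne α hα β hβ := (h.le_of_ne α hα β hβ).trans (h'.le_of_ne α (h.isMax α hα) β hβ)

theorem eq_of_sup_eq (h : IsFlattening n m) (hsup : univ.sup m = univ.sup n) : m = n := by
  funext i
  have : Nonempty ι := ⟨i⟩
  obtain ⟨α, hα⟩ := Finite.exists_max n
  have hapex : n α ≤ m α := calc
    n α ≤ univ.sup n := le_sup (mem_univ α)
    _ = univ.sup m := hsup.symm
    _ ≤ m α := Finset.sup_le fun r _ => h.isMax α hα r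
  have hle : ∀ j ∈ univ, n j ≤ m j := fun j _ => by
    obtain rfl | hj := eq_or_ne j α
    · exact hapex
    · exact h.le_of_ne α hα j hj
  have hsum : ∑ j, n j = ∑ j, m j := (sum_le_sum hle).antisymm h.sum_le
  exact ((sum_eq_sum_iff_of_le hle).1 hsum i (mem_univ i)).symm

theorem of_unique_isMax (hn : ∀ r, r ≠ α → n r < n α) (hsum : ∑ i, m i ≤ ∑ i, n i)
    (hmax : ∀ r, m r ≤ m α) (hα : m α ≤ n α) (hle : ∀ r, r ≠ α → n r ≤ m r) :
    IsFlattening n m := by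
  have eq_apex : ∀ γ, (∀ r, n r ≤ n γ) → γ = α := fun γ hγ =>
    not_imp_comm.1 (hn γ) (hγ α).not_gt
  refine ⟨hsum, fun γ hγ => ?_, fun γ hγ => ?_, fun γ hγ => ?_⟩ <;> rw [eq_apex γ hγ]
  exacts [hmax, hα, hle]

theorem sup_lt (h : IsFlattening n m) (hn : ∀ r, r ≠ α → n r < n α) (hα : m α < n α) :
    univ.sup m < univ.sup n := by
  have hmax : ∀ r, n r ≤ n α := fun r => by
    obtain rfl | hr := eq_or_ne r α
    exacts [le_rfl, (hn r hr).le]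
  calc
    univ.sup m ≤ m α := Finset.sup_le fun r _ => h.isMax α hmax r
    _ < n α := hα
    _ ≤ univ.sup n := le_sup (mem_univ α)

end IsFlattening

variable [DecidableEq ι]

theorem sum_add_single_one (a : ι → ℕ) (β : ι) :
    ∑ i, (a + Pi.single β 1 : ι → ℕ) i = ∑ i, a i + 1 := by
  simp [sum_add_distrib]

theorem isFlattening_add_single_self (ha : ∀ r, r ≠ α → a r < a α) :
    IsFlattening (a + Pi.single α 1) a := by
  refine .of_unique_isMax (add_single_one_lt_apex ha) ?_ (fun r => ?_) ?_ (fun r hr => ?_)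
  · exact (sum_add_single_one a α).symm ▸ Nat.le_succ _
  · obtain rfl | hr := eq_or_ne r α
    exacts [le_rfl, (ha r hr).le]
  · simp
  · simp [hr]

theorem isFlattening_add_single_of_ne (ha : ∀ r, r ≠ α → a r < a α) (hβ : β ≠ α) :
    IsFlattening (a + Pi.single α 1) (a + Pi.single β 1) := by
  refine .of_unique_isMax (add_single_one_lt_apex ha) ?_ (fun r => ?_) ?_ (fun r hr => ?_)
  · simp only [sum_add_single_one, le_rfl]
  · have hapex : (a + Pi.single β 1 : ι → ℕ) α = a α := by simp [hβ.symm]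
    rw [hapex]
    obtain rfl | hrβ := eq_or_ne r β
    · simpa using ha r hβ
    obtain rfl | hrα := eq_or_ne r α
    · exact hapex.le
    · simpa [hrβ] using (ha r hrα).le
  · simp [hβ.symm]
  · simp [hr]

end Flattening

section Monomial

variable {ι M : Type*} [Fintype ι] [CommMonoid M]

theorem prod_pow_add_single_one [DecidableEq ι] (x : ι → M) (a : ι → ℕ) (β : ι) :
    ∏ i, x i ^ (a + Pi.single β 1 : ι → ℕ) i = (∏ i, x i ^ a i) * x β := by
  simp only [Pi.add_apply, pow_add, prod_mul_distrib, Pi.single_apply, pow_ite, pow_one, pow_zero,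
    prod_ite_eq', mem_univ, if_true]

/-- The monomial `x ^ m` completed to degree `d` by a power of `t`. The subtraction truncates when
`m` has degree more than `d`. -/
def homogenizedMonomial (x : ι → M) (t : M) (d : ℕ) (m : ι → ℕ) : M :=
  (∏ i, x i ^ m i) * t ^ (d - ∑ i, m i)

theorem pow_mul_homogenizedMonomial (x : ι → M) (t : M) (e : ℕ) {d : ℕ} {m : ι → ℕ}
    (hm : ∑ i, m i ≤ d) :
    t ^ e * homogenizedMonomial x t d m = homogenizedMonomial x t (d + e) m := by
  rw [homogenizedMonomial, homogenizedMonomial, Nat.sub_add_comm hm, pow_add, mul_comm,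
    mul_assoc]

end Monomial

section Expansion

variable {ι R : Type*} [Fintype ι] [CommRing R] {x : ι → R} {t : R} {n n' : ι → ℕ}

theorem prod_pow_add_single_one_eq_neg_sum_sub [DecidableEq ι] (hx : ∑ i, x i + t = 0)
    (a : ι → ℕ) (α : ι) :
    ∏ i, x i ^ (a + Pi.single α 1 : ι → ℕ) i =
      -(∑ β ∈ univ.erase α, ∏ i, x i ^ (a + Pi.single β 1 : ι → ℕ) i) - t * ∏ i, x i ^ a i := by
  simp only [prod_pow_add_single_one, ← mul_sum]
  rw [← add_sum_erase _ _ (mem_univ α)] at hx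
  linear_combination (∏ i, x i ^ a i) * hx

/-- The integer combinations of the monomials to which the expansion of `x ^ n` is restricted:
those with balanced exponent flattening `n`, completed by `t` to the degree of `n`. -/
def balancedSpan (x : ι → R) (t : R) (n : ι → ℕ) : Submodule ℤ R :=
  Submodule.span ℤ (homogenizedMonomial x t (∑ i, n i) '' {m | IsBalanced m ∧ IsFlattening n m})

theorem prod_pow_mem_balancedSpan_of_isBalanced (x : ι → R) (t : R) (hn : IsBalanced n) :
    ∏ i, x i ^ n i ∈ balancedSpan x t n :=
  Submodule.subset_span ⟨n, ⟨hn, .refl n⟩, by simp [homogenizedMonomial]⟩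

theorem IsFlattening.pow_mul_mem_balancedSpan (h : IsFlattening n n') {e : ℕ}
    (he : ∑ i, n i = ∑ i, n' i + e) {y : R} (hy : y ∈ balancedSpan x t n') :
    t ^ e * y ∈ balancedSpan x t n := by
  suffices balancedSpan x t n' ≤ (balancedSpan x t n).comap (LinearMap.mulLeft ℤ (t ^ e)) from
    this hy
  refine Submodule.span_le.2 ?_
  rintro _ ⟨m, ⟨hm, hflat⟩, rfl⟩
  refine Submodule.subset_span ⟨m, ⟨hm, h.trans hflat⟩, ?_⟩
  rw [he, LinearMap.mulLeft_apply, pow_mul_homogenizedMonomial x t e hflat.sum_le]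

theorem prod_pow_mem_balancedSpan [Nontrivial ι] (hx : ∑ i, x i + t = 0) (n : ι → ℕ) :
    ∏ i, x i ^ n i ∈ balancedSpan x t n := by
  classical
  induction hN : univ.sup n using Nat.strong_induction_on generalizing n with
  | _ N ih =>
  subst hN
  by_cases hn : IsBalanced n
  · exact prod_pow_mem_balancedSpan_of_isBalanced x t hn
  obtain ⟨a, α, ha, rfl⟩ := exists_eq_add_single_of_not_isBalanced hn
  have hapex := add_single_one_lt_apex ha
  have hself := isFlattening_add_single_self ha
  rw [prod_pow_add_single_one_eq_neg_sum_sub hx]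
  refine sub_mem (neg_mem (sum_mem fun β hβ => ?_)) ?_
  · have hne := isFlattening_add_single_of_ne ha (ne_of_mem_erase hβ)
    have hlt := hne.sup_lt hapex (by simp [(ne_of_mem_erase hβ).symm])
    simpa using hne.pow_mul_mem_balancedSpan (e := 0) (by simp only [sum_add_single_one, add_zero])
      (ih _ hlt _ rfl)
  · have hlt := hself.sup_lt hapex (by simp)
    simpa using hself.pow_mul_mem_balancedSpan (sum_add_single_one a α) (ih _ hlt _ rfl)

theorem stmt_16_general [Nontrivial ι] (hx : ∑ i, x i + t = 0) (n : ι → ℕ) :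
    ∃ b : (ι → ℕ) →₀ ℤ, (∀ m, b m ≠ 0 → IsBalanced m ∧ IsFlattening n m) ∧
      ∏ i, x i ^ n i = b.sum fun m c => c • homogenizedMonomial x t (∑ i, n i) m := by
  obtain ⟨b, hb, hsum⟩ := (Finsupp.mem_span_image_iff_linearCombination ℤ).1
    (prod_pow_mem_balancedSpan hx n)
  refine ⟨b, fun m hm => ?_, ?_⟩
  · exact (Finsupp.mem_supported ℤ b).1 hb (Finsupp.mem_support_iff.2 hm)
  · rw [← hsum, Finsupp.linearCombination_apply]

end Expansion

/-- The tuple `(λ₀, λ_1, …, λ_k)`. -/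
noncomputable def lamVec (k : ℕ) : Fin (k + 1) → MvPolynomial (Option (Fin k)) ℤ :=
  Fin.cons (lamPZero k) (lamP k)

theorem sum_lamVec_add_tP (k : ℕ) : ∑ i, lamVec k i + tP k = 0 := by
  simp [lamVec, Fin.sum_univ_succ, lamPZero, sub_add_eq_add_sub]

theorem prod_lamVec_pow (k : ℕ) (m : Fin (k + 1) → ℕ) :
    ∏ i, lamVec k i ^ m i = lamPZero k ^ m 0 * ∏ a : Fin k, lamP k a ^ m a.succ := by
  simp [lamVec, Fin.prod_univ_succ]

theorem homogenizedMonomial_lamVec (k : ℕ) (n m : Fin (k + 1) → ℕ) :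
    homogenizedMonomial (lamVec k) (tP k) (∑ i, n i) m =
      lamPZero k ^ m 0 * (∏ a : Fin k, lamP k a ^ m a.succ)
        * tP k ^ (∑ i : Fin (k + 1), ((n i : ℤ) - (m i : ℤ))).toNat := by
  rw [homogenizedMonomial, prod_lamVec_pow, sum_sub_distrib, ← Nat.cast_sum, ← Nat.cast_sum,
    Int.toNat_sub]

/-- Fix `k ≥ 1` and work in `ℤ[λ_1,…,λ_k,t]` with `λ₀ = −λ_1 − ⋯ − λ_k − t`.  For every
tuple `(n_0,…,n_k) ∈ ℤ≥0^{k+1}` there is a finitely supported family of integers `b`,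
indexed by the tuples `(m_0,…,m_k)` whose non-increasing rearrangement satisfies
`μ_0 − μ_1 ∈ {0,1}`, such that:
(1) `λ₀^{n_0} λ_1^{n_1} ⋯ λ_k^{n_k}
  = Σ_m b_m · λ₀^{m_0} λ_1^{m_1} ⋯ λ_k^{m_k} · t^{Σ_i (n_i − m_i)}`;
(2) for every `α` with `n_α = ν_0` (maximal), `b_m = 0` unless `m_α = μ_0 ≤ ν_0`,
`m_β ≥ n_β` for every `β ≠ α`, and `Σ_i (n_i − m_i) ≥ 0`; in particular if `μ_0 = ν_0`
then `b_m = 0` unless `m = n`. -/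
theorem stmt_16 (k : ℕ) (hk : 1 ≤ k) (n : Fin (k + 1) → ℕ) :
    ∃ b : (Fin (k + 1) → ℕ) →₀ ℤ,
      (∀ m, ¬ gapLeOne k m → b m = 0) ∧
      (lamPZero k ^ n 0 * ∏ a : Fin k, lamP k a ^ n a.succ
        = b.sum fun m bm =>
            bm • (lamPZero k ^ m 0 * (∏ a : Fin k, lamP k a ^ m a.succ)
              * tP k ^ (∑ i : Fin (k + 1), ((n i : ℤ) - (m i : ℤ))).toNat)) ∧
      (∀ (m : Fin (k + 1) → ℕ) (α : Fin (k + 1)), (∀ r, n r ≤ n α) → b m ≠ 0 →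
        ((∀ r, m r ≤ m α) ∧ m α ≤ n α ∧ (∀ β, β ≠ α → n β ≤ m β) ∧
          ∑ i : Fin (k + 1), m i ≤ ∑ i : Fin (k + 1), n i)) ∧
      (∀ m : Fin (k + 1) → ℕ, b m ≠ 0 →
        Finset.univ.sup m = Finset.univ.sup n → m = n) := by
  have : Nontrivial (Fin (k + 1)) := Fin.nontrivial_iff_two_le.2 (Nat.succ_le_succ hk)
  obtain ⟨b, hb, hsum⟩ := stmt_16_general (sum_lamVec_add_tP k) n
  refine ⟨b, fun m hgap => ?_, ?_, fun m α hα hm => ?_, fun m hm => (hb m hm).2.eq_of_sup_eq⟩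
  · exact not_imp_comm.1 (hb m) fun h => hgap h.1.gapLeOne
  · simpa only [prod_lamVec_pow, homogenizedMonomial_lamVec] using hsum
  · have h := (hb m hm).2
    exact ⟨h.isMax α hα, h.apex_le α hα, h.le_of_ne α hα, h.sum_le⟩
end

section
/- Let V be an algebra of differential functions in ℓ < ∞ differential variables over a field of characteristic zero, and let K(∂) = (K_{ij}(∂)) be an ℓ×ℓ matrix differential operator with quasiconstant coefficients. Then: (a) for every k ≥ 0 the map δ_K is a well-defined map Ω̃^k(V) → Ω̃^{k+1}(V) (i.e., δ_K P is again skewsymmetric), and δ_K ∘ δ_K = 0, so (Ω̃•(V), δ_K) is a cohomology complex; (b) δ_K commutes with the action of ∂ on Ω̃•(V) given by (∂P)_{i_1,…,i_k}(λ_1,…,λ_k) = (∂ + λ_1 + ⋯ + λ_k) P_{i_1,…,i_k}(λ_1,…,λ_k) (with ∂ applied to the coefficients); consequently the canonical quotient map Ω̃•(V) → Ω•(V) := Ω̃•(V)/∂Ω̃•(V) is a homomorphism of complexes (δ_K descends to Ω•(V) and squares to zero there). -/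
/-- The structure of an algebra of differential functions in `ℓ` differential variables
on a commutative ring `V`: a derivation `∂ = pd` and pairwise commuting derivations
`∂/∂u_i^{(n)} = D i n` such that each `f ∈ V` is annihilated by all but finitely many of
the `D i n`, and `[D i n, ∂] = D i (n−1)` (zero for `n = 0`). -/
structure IsAlgDiffFun {V : Type*} [CommRing V] {l : ℕ}
    (pd : V → V) (D : Fin l → ℕ → V → V) : Prop where
  pd_add : ∀ a b : V, pd (a + b) = pd a + pd b
  pd_leibniz : ∀ a b : V, pd (a * b) = pd a * b + a * pd b
  d_add : ∀ (i : Fin l) (n : ℕ) (a b : V), D i n (a + b) = D i n a + D i n b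
  d_leibniz : ∀ (i : Fin l) (n : ℕ) (a b : V), D i n (a * b) = D i n a * b + a * D i n b
  d_comm : ∀ (i : Fin l) (n : ℕ) (j : Fin l) (m : ℕ) (f : V),
    D i n (D j m f) = D j m (D i n f)
  d_fin : ∀ f : V, {p : Fin l × ℕ | D p.1 p.2 f ≠ 0}.Finite
  comm_zero : ∀ (i : Fin l) (f : V), D i 0 (pd f) = pd (D i 0 f)
  comm_succ : ∀ (i : Fin l) (n : ℕ) (f : V),
    D i (n + 1) (pd f) = pd (D i (n + 1) f) + D i n f

/-- Apply a map `f` to all the coefficients of a polynomial. -/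
noncomputable def coeffMap {V : Type*} [CommRing V] {k : ℕ} (f : V → V)
    (Q : MvPolynomial (Fin k) V) : MvPolynomial (Fin k) V :=
  ∑ m ∈ Q.support, (MvPolynomial.monomial m) (f (MvPolynomial.coeff m Q))

/-- The polynomial `(λ_α + ∂)^n K_{j,i'}(λ_α) = Σ_m Σ_{p=0}^n binom(n,p) (∂^p K_{j,i',m})
λ_α^{n−p+m}`, where `K_{j,i'}(∂) = Σ_{m=0}^N K_{j,i',m} ∂^m`. -/
noncomputable def kFactor {V : Type*} [CommRing V] {l : ℕ} (pd : V → V)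
    (N : ℕ) (Kc : Fin l → Fin l → ℕ → V) (n : ℕ) (j i' : Fin l) {k : ℕ} (α : Fin k) :
    MvPolynomial (Fin k) V :=
  ∑ m ∈ Finset.range (N + 1), ∑ p ∈ Finset.range (n + 1),
    (MvPolynomial.monomial (Finsupp.single α (n - p + m)))
      ((n.choose p : V) * pd^[p] (Kc j i' m))

/-- The map `δ_K : Ω̃^k(V) → Ω̃^{k+1}(V)`:
`(δ_K P)_{i_0,…,i_k}(λ_0,…,λ_k) = Σ_α (−1)^α Σ_j Σ_n
(∂ P_{i_0,…,î_α,…,i_k}(λ_0,…,λ̂_α,…,λ_k)/∂u_j^{(n)}) ((λ_α+∂)^n K_{j,i_α}(λ_α))`. -/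
noncomputable def deltaK {V : Type*} [CommRing V] {l : ℕ} (pd : V → V)
    (D : Fin l → ℕ → V → V) (N : ℕ) (Kc : Fin l → Fin l → ℕ → V) {k : ℕ}
    (P : (Fin k → Fin l) → MvPolynomial (Fin k) V) :
    (Fin (k + 1) → Fin l) → MvPolynomial (Fin (k + 1)) V :=
  fun i => ∑ α : Fin (k + 1), (-1 : ℤ) ^ (α : ℕ) •
    ∑ j : Fin l, ∑ᶠ n : ℕ,
      coeffMap (D j n) (MvPolynomial.rename α.succAbove (P (fun b => i (α.succAbove b))))
        * kFactor pd N Kc n j (i α) α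

/-- An array `P ∈ Ω̃^k(V)` is skewsymmetric if it is skewsymmetric with respect to
simultaneous permutations of the variables `λ_1,…,λ_k` and the indices `i_1,…,i_k`. -/
def OmegaSkew {V : Type*} [CommRing V] {l k : ℕ}
    (P : (Fin k → Fin l) → MvPolynomial (Fin k) V) : Prop :=
  ∀ (σ : Equiv.Perm (Fin k)) (i : Fin k → Fin l),
    MvPolynomial.rename σ (P (fun a => i (σ a))) = (Equiv.Perm.sign σ : ℤ) • P i

/-- The action of `∂` on `Ω̃^k(V)`:
`(∂P)_{i_1,…,i_k}(λ_1,…,λ_k) = (∂ + λ_1 + ⋯ + λ_k) P_{i_1,…,i_k}(λ_1,…,λ_k)` with `∂`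
applied to the coefficients. -/
noncomputable def bigD {V : Type*} [CommRing V] {l k : ℕ} (pd : V → V)
    (P : (Fin k → Fin l) → MvPolynomial (Fin k) V) :
    (Fin k → Fin l) → MvPolynomial (Fin k) V :=
  fun i => (∑ a : Fin k, MvPolynomial.X a) * P i + coeffMap pd (P i)

/-!
For a slot `α` and an index `i`, let `X_{α,i} = Σ_{j,n} ((λ_α + ∂)^n K_{j,i}(λ_α)) ∂/∂u_j^{(n)}` be
the evolutionary vector field with characteristic the column `K_{·,i}(λ_α)`, acting on coefficients.
Then `(δ_K P)_i` is the alternating sum over `α` of `X_{α,i_α}` applied to `P` with the slot `α`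
left out. A permutation `σ` of the slots restricts to the remaining ones as a permutation of sign
`(-1)^{α + σ(α)} sign σ`, whence skewsymmetry. Since `K` is quasiconstant, any two of these vector
fields commute, so the terms of `δ_K² P` cancel in pairs. Since `[∂/∂u_j^{(n)}, ∂] =
∂/∂u_j^{(n-1)}`, re-indexing the sum gives `[X_{α,i}, ∂] = λ_α X_{α,i}`, and the factor `λ_α`
supplies the variable missing from the sum `∂ + Σ_{β ≠ α} λ_β` through which `∂` acts on `P` with
the slot `α` left out.
-/

open MvPolynomial

section Combination

variable {R S A B ι : Type*} [CommRing R] [CommRing S] [CommRing A] [Algebra R A]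
  [CommRing B] [Algebra S B]

/-- A family of derivations is pointwise finite if every element is annihilated by all but finitely
many of its members; then arbitrary linear combinations of the family make sense. -/
def PointwiseFinite (D : ι → Derivation R A A) : Prop :=
  ∀ a, Function.HasFiniteSupport fun p => D p a

namespace PointwiseFinite

variable {D : ι → Derivation R A A} {D' : ι → Derivation S B B}

lemma hasFiniteSupport_mul (hD : PointwiseFinite D) (c : ι → A) (a : A) :
    Function.HasFiniteSupport fun p => c p * D p a :=
  (hD a).subset (Function.support_mul_subset_right _ _)

/-- The derivation `Σ_p c_p D_p`, for a pointwise finite family `D` and arbitrary coefficients. -/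
noncomputable def combination (hD : PointwiseFinite D) (c : ι → A) : Derivation R A A :=
  Derivation.mk'
    { toFun := fun a => ∑ᶠ p, c p * D p a
      map_add' := fun a b => by
        simp only [map_add, mul_add]
        exact finsum_add_distrib (hD.hasFiniteSupport_mul c a) (hD.hasFiniteSupport_mul c b)
      map_smul' := fun r a => by
        simp only [Derivation.map_smul, mul_smul_comm, RingHom.id_apply]
        exact (smul_finsum' r (hD.hasFiniteSupport_mul c a)).symm }
    fun a b => by
      simp only [LinearMap.coe_mk, AddHom.coe_mk, smul_eq_mul, Derivation.leibniz, mul_add,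
        mul_left_comm (c _)]
      rw [mul_finsum' _ _ (hD.hasFiniteSupport_mul c a),
        mul_finsum' _ _ (hD.hasFiniteSupport_mul c b)]
      exact finsum_add_distrib ((hD.hasFiniteSupport_mul c b).subset
        (Function.support_mul_subset_right _ _)) ((hD.hasFiniteSupport_mul c a).subset
        (Function.support_mul_subset_right _ _))

lemma combination_apply (hD : PointwiseFinite D) (c : ι → A) (a : A) :
    hD.combination c a = ∑ᶠ p, c p * D p a := rfl

lemma combination_eq_zero (hD : PointwiseFinite D) (c : ι → A) {a : A} (ha : ∀ p, D p a = 0) :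
    hD.combination c a = 0 := by
  simp [combination_apply, ha]

lemma map_combination {F : Type*} [FunLike F A B] [RingHomClass F A B] (hD : PointwiseFinite D)
    (hD' : PointwiseFinite D') (f : F) (hf : ∀ p a, f (D p a) = D' p (f a)) (c : ι → A) (a : A) :
    f (hD.combination c a) = hD'.combination (fun p => f (c p)) (f a) := by
  simp only [combination_apply, map_finsum f (hD.hasFiniteSupport_mul c a), map_mul, hf]

lemma lie_combination_apply (hD : PointwiseFinite D) (c : ι → A) (d : Derivation R A A) (a : A) :
    ⁅hD.combination c, d⁆ a =
      ∑ᶠ p, c p * ⁅D p, d⁆ a - hD.combination (fun p => d (c p)) a := by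
  have hd : Function.HasFiniteSupport fun p => c p * d (D p a) :=
    (hD a).subset fun p hp h => hp (by simp [h])
  simp only [Derivation.commutator_apply, combination_apply, mul_sub,
    map_finsum d (hD.hasFiniteSupport_mul c a), Derivation.leibniz, smul_eq_mul,
    mul_comm (D _ a) (d _)]
  rw [finsum_sub_distrib (hD.hasFiniteSupport_mul c (d a)) hd,
    finsum_add_distrib hd (hD.hasFiniteSupport_mul _ a)]
  abel

lemma lie_combination_eq_zero (hD : PointwiseFinite D) {c : ι → A} {d : Derivation R A A}
    (hd : ∀ p, ⁅D p, d⁆ = 0) (hc : ∀ p, d (c p) = 0) : ⁅hD.combination c, d⁆ = 0 := by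
  ext a
  simp [lie_combination_apply, combination_apply, hd, hc]

lemma lie_combination_combination (hD : PointwiseFinite D) (hcomm : ∀ p q, ⁅D p, D q⁆ = 0)
    {b c : ι → A} (hb : ∀ p q, D q (b p) = 0) (hc : ∀ p q, D q (c p) = 0) :
    ⁅hD.combination b, hD.combination c⁆ = 0 := by
  refine hD.lie_combination_eq_zero (fun p => ?_) fun p => hD.combination_eq_zero c (hb p)
  rw [← lie_skew, hD.lie_combination_eq_zero (fun q => hcomm q p) fun q => hc q p, neg_zero]

lemma lie_combination_of_shift (hD : PointwiseFinite D) {d : Derivation R A A} {s : ι → ι}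
    (hs : s.Injective) (hshift : ∀ p, ⁅D (s p), d⁆ = D p)
    (hzero : ∀ q ∉ Set.range s, ⁅D q, d⁆ = 0)
    {c : ι → A} {x : A} (hc : ∀ p, c (s p) = x * c p + d (c p)) :
    ⁅hD.combination c, d⁆ = x • hD.combination c := by
  ext a
  have reindex : ∑ᶠ q, c q * ⁅D q, d⁆ a = hD.combination (fun p => c (s p)) a := by
    have hsupp : Function.support (fun q => c q * ⁅D q, d⁆ a) ⊆ Set.range s := fun q hq => by
      by_contra hqs
      exact hq (by simp [hzero q hqs])
    rw [← finsum_mem_univ, finsum_mem_inter_support_eq' _ Set.univ (Set.range s) fun q hq =>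
      iff_of_true (Set.mem_univ q) (hsupp hq), finsum_mem_range hs, combination_apply]
    simp only [hshift]
  rw [lie_combination_apply, reindex]
  simp only [combination_apply, hc, add_mul, mul_assoc, Derivation.smul_apply, smul_eq_mul]
  rw [mul_finsum' _ _ (hD.hasFiniteSupport_mul c a), sub_eq_iff_eq_add]
  exact finsum_add_distrib ((hD.hasFiniteSupport_mul c a).subset
    (Function.support_mul_subset_right _ _)) (hD.hasFiniteSupport_mul _ a)

end PointwiseFinite

end Combination

section CoeffDerivation

variable {R A σ τ ι : Type*} [CommRing R] [CommRing A] [Algebra R A]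

lemma coeff_map_addMonoidHom (f : A →+ A) (m : σ →₀ ℕ) (P : MvPolynomial σ A) :
    coeff m (AddMonoidAlgebra.map f P) = f (coeff m P) := rfl

variable (σ) in
/-- The action of a derivation of `A` on the coefficients of polynomials over `A`. -/
noncomputable def coeffDerivation (d : Derivation R A A) :
    Derivation R (MvPolynomial σ A) (MvPolynomial σ A) :=
  Derivation.mk'
    { toFun := AddMonoidAlgebra.map d
      map_add' := fun P Q => by
        ext m
        simp only [coeff_map_addMonoidHom, coeff_add, map_add]
      map_smul' := fun r P => by
        ext m
        simp only [coeff_map_addMonoidHom, coeff_smul, RingHom.id_apply]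
        exact d.map_smul r _ }
    fun P Q => by
      classical
      ext m
      simp only [LinearMap.coe_mk, AddHom.coe_mk, smul_eq_mul, mul_comm Q, coeff_add, coeff_mul,
        coeff_map_addMonoidHom, map_sum, ← Finset.sum_add_distrib]
      refine Finset.sum_congr rfl fun p _ => (d.leibniz _ _).trans ?_
      rw [smul_eq_mul, smul_eq_mul, mul_comm (coeff p.2 Q)]
      rfl

lemma coeff_coeffDerivation (d : Derivation R A A) (m : σ →₀ ℕ) (P : MvPolynomial σ A) :
    coeff m (coeffDerivation _ d P) = d (coeff m P) := rfl

lemma coeffDerivation_monomial (d : Derivation R A A) (m : σ →₀ ℕ) (a : A) :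
    coeffDerivation _ d (monomial m a) = monomial m (d a) := by
  classical
  ext n
  simp only [coeff_coeffDerivation, coeff_monomial, apply_ite d, map_zero]

lemma coeffDerivation_X (d : Derivation R A A) (i : σ) :
    coeffDerivation _ d (X i : MvPolynomial σ A) = 0 := by
  rw [X, coeffDerivation_monomial, d.map_one_eq_zero, map_zero]

lemma rename_coeffDerivation (d : Derivation R A A) (f : σ → τ) (P : MvPolynomial σ A) :
    rename f (coeffDerivation _ d P) = coeffDerivation _ d (rename f P) := by
  induction P using MvPolynomial.induction_on' with
  | monomial m a => simp only [coeffDerivation_monomial, rename_monomial]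
  | add P Q hP hQ => simp only [map_add, hP, hQ]

lemma lie_coeffDerivation (d e : Derivation R A A) :
    ⁅coeffDerivation σ d, coeffDerivation σ e⁆ = coeffDerivation σ ⁅d, e⁆ := by
  ext P m
  rfl

lemma coeffDerivation_zero :
    coeffDerivation σ (0 : Derivation R A A) = 0 := by
  ext P m
  rfl

lemma PointwiseFinite.coeffDerivation {D : ι → Derivation R A A} (hD : PointwiseFinite D) :
    PointwiseFinite fun p => _root_.coeffDerivation σ (D p) := by
  intro P
  refine (Set.Finite.biUnion P.support.finite_toSet fun m _ => hD (coeff m P)).subset ?_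
  intro p hp
  obtain ⟨m, hm⟩ := ne_zero_iff.1 hp
  have hPm : coeff m P ≠ 0 := fun h => hm (by rw [coeff_coeffDerivation, h, map_zero])
  exact Set.mem_biUnion (mem_support_iff.2 hPm) hm

lemma coeffMap_eq_coeffDerivation {k : ℕ} (d : Derivation R A A) (P : MvPolynomial (Fin k) A) :
    coeffMap d P = coeffDerivation _ d P := by
  conv_rhs => rw [P.as_sum, map_sum]
  simp only [coeffMap, coeffDerivation_monomial]

end CoeffDerivation

section Fin

variable {n : ℕ}

lemma exists_perm_succ_of_apply_zero (ρ : Equiv.Perm (Fin (n + 1))) (hρ : ρ 0 = 0) :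
    ∃ τ : Equiv.Perm (Fin n), (∀ b, ρ b.succ = (τ b).succ) ∧ τ.sign = ρ.sign := by
  obtain ⟨⟨p, τ⟩, rfl⟩ := Equiv.Perm.decomposeFin.symm.surjective ρ
  obtain rfl : p = 0 := by rwa [Equiv.Perm.decomposeFin_symm_apply_zero] at hρ
  refine ⟨τ, fun b => ?_, ?_⟩
  · rw [Equiv.Perm.decomposeFin_symm_apply_succ, Equiv.swap_self, Equiv.refl_apply]
  · rw [Equiv.Perm.decomposeFin.symm_sign, if_pos rfl, one_mul]

lemma exists_perm_succAbove (σ : Equiv.Perm (Fin (n + 1))) (α : Fin (n + 1)) :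
    ∃ τ : Equiv.Perm (Fin n), (∀ b, σ (α.succAbove b) = (σ α).succAbove (τ b)) ∧
      (-1) ^ (α : ℕ) * τ.sign = σ.sign * (-1) ^ (σ α : ℕ) := by
  obtain ⟨τ, hτ, hsign⟩ := exists_perm_succ_of_apply_zero
    ((σ α).cycleRange * σ * α.cycleRange⁻¹) (by simp [Equiv.Perm.inv_def])
  refine ⟨τ, fun b => ?_, ?_⟩
  · rw [← Fin.cycleRange_symm_succ (σ α), ← hτ]
    simp [Equiv.Perm.inv_def, Fin.cycleRange_symm_succ]
  · rw [hsign, map_mul, map_mul, map_inv, Fin.sign_cycleRange, Fin.sign_cycleRange, mul_comm,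
      inv_mul_cancel_right, mul_comm]

lemma sum_sum_neg_one_pow_smul_eq_zero {M : Type*} [AddCommGroup M]
    {f : Fin (n + 2) → Fin (n + 1) → M}
    (hf : ∀ α β, f (α.succAbove β) (β.predAbove α) = f α β) :
    ∑ α : Fin (n + 2), ∑ β : Fin (n + 1), (-1 : ℤ) ^ (α + β : ℕ) • f α β = 0 := by
  rw [← Fintype.sum_prod_type']
  refine Finset.sum_involution (fun x _ => (x.1.succAbove x.2, x.2.predAbove x.1)) ?_ ?_ ?_ ?_
  · rintro ⟨α, β⟩ -
    rw [hf, Fin.neg_one_pow_succAbove_add_predAbove, neg_smul, add_neg_cancel]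
  · exact fun x _ _ h => Fin.succAbove_ne x.1 x.2 (congrArg Prod.fst h)
  · exact fun _ _ => Finset.mem_univ _
  · exact fun x _ => Prod.ext (Fin.succAbove_succAbove_predAbove _ _)
      (Fin.predAbove_predAbove_succAbove _ _)

end Fin

section KFactor

variable {R V : Type*} [CommRing R] [CommRing V] [Algebra R V] {l : ℕ}

lemma rename_kFactor (pd : V → V) (N : ℕ) (Kc : Fin l → Fin l → ℕ → V) {k k' : ℕ}
    (f : Fin k → Fin k') (n : ℕ) (j i : Fin l) (α : Fin k) :
    rename f (kFactor pd N Kc n j i α) = kFactor pd N Kc n j i (f α) := by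
  simp only [kFactor, map_sum, rename_monomial, Finsupp.mapDomain_single]

lemma coeffDerivation_kFactor_eq_zero (d : Derivation R V V) {pd : V → V} {N : ℕ}
    {Kc : Fin l → Fin l → ℕ → V} (h : ∀ p i j m, d (pd^[p] (Kc i j m)) = 0) {k : ℕ}
    (n : ℕ) (j i : Fin l) (α : Fin k) :
    coeffDerivation _ d (kFactor pd N Kc n j i α) = 0 := by
  simp only [kFactor, map_sum, coeffDerivation_monomial, Derivation.leibniz, h,
    Derivation.map_natCast, smul_zero, add_zero, map_zero, Finset.sum_const_zero]

lemma coeffDerivation_pow_monomial {σ : Type*} (d : Derivation R V V) (p : ℕ) (m : σ →₀ ℕ) (a : V) :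
    ((coeffDerivation σ d : Module.End R (MvPolynomial σ V)) ^ p) (monomial m a) =
      monomial m (d^[p] a) := by
  induction p with
  | zero => rfl
  | succ p ih =>
    rw [pow_succ', Module.End.mul_apply, ih, Function.iterate_succ_apply']
    exact coeffDerivation_monomial d m _

lemma kFactor_eq_pow (d : Derivation R V V) (N : ℕ) (Kc : Fin l → Fin l → ℕ → V) {k : ℕ}
    (n : ℕ) (j i : Fin l) (α : Fin k) :
    kFactor d N Kc n j i α = ((LinearMap.mulLeft R (X α) + (coeffDerivation (Fin k) d).toLinearMap :
      Module.End R (MvPolynomial (Fin k) V)) ^ n)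
        (∑ m ∈ Finset.range (N + 1), monomial (Finsupp.single α m) (Kc j i m)) := by
  have hcomm : Commute (coeffDerivation (Fin k) d : Module.End R (MvPolynomial (Fin k) V))
      (LinearMap.mulLeft R (X α)) := by
    refine LinearMap.ext fun P => ?_
    simp [coeffDerivation_X]
  rw [add_comm, hcomm.add_pow, LinearMap.sum_apply]
  simp only [map_sum, kFactor]
  rw [Finset.sum_comm]
  refine Finset.sum_congr rfl fun p _ => Finset.sum_congr rfl fun m _ => ?_
  rw [← (Nat.cast_commute _ _).eq, Module.End.mul_apply, Module.End.mul_apply,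
    LinearMap.pow_mulLeft, LinearMap.mulLeft_apply, X_pow_eq_monomial, monomial_mul,
    ← Finsupp.single_add, one_mul, coeffDerivation_pow_monomial,
    Module.End.natCast_apply, ← map_nsmul, nsmul_eq_mul]

lemma kFactor_succ (d : Derivation R V V) (N : ℕ) (Kc : Fin l → Fin l → ℕ → V) {k : ℕ}
    (n : ℕ) (j i : Fin l) (α : Fin k) :
    kFactor d N Kc (n + 1) j i α =
      X α * kFactor d N Kc n j i α + coeffDerivation _ d (kFactor d N Kc n j i α) := by
  rw [kFactor_eq_pow, pow_succ', Module.End.mul_apply, ← kFactor_eq_pow]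
  rfl

end KFactor

/-- A map satisfying the additivity and Leibniz rules, as a derivation over `ℤ`. -/
def derivationOfLeibniz {A : Type*} [CommRing A] (f : A → A) (hadd : ∀ a b, f (a + b) = f a + f b)
    (hmul : ∀ a b, f (a * b) = f a * b + a * f b) : Derivation ℤ A A :=
  Derivation.mk' (AddMonoidHom.mk' f hadd).toIntLinearMap fun a b => by
    simp [hmul, mul_comm b, add_comm]

namespace IsAlgDiffFun

variable {V : Type*} [CommRing V] {l : ℕ} {pd : V → V} {D : Fin l → ℕ → V → V}

/-- The derivation `∂`. -/
def totalDerivation (hV : IsAlgDiffFun pd D) : Derivation ℤ V V :=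
  derivationOfLeibniz pd hV.pd_add hV.pd_leibniz

/-- The derivations `∂/∂u_j^{(n)}`, as a family indexed by the pairs `(j, n)`. -/
def partialDerivation (hV : IsAlgDiffFun pd D) (p : Fin l × ℕ) : Derivation ℤ V V :=
  derivationOfLeibniz (D p.1 p.2) (hV.d_add p.1 p.2) (hV.d_leibniz p.1 p.2)

lemma coe_partialDerivation (hV : IsAlgDiffFun pd D) (p : Fin l × ℕ) :
    ⇑(hV.partialDerivation p) = D p.1 p.2 := rfl

lemma pointwiseFinite (hV : IsAlgDiffFun pd D) : PointwiseFinite hV.partialDerivation :=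
  hV.d_fin

lemma lie_partialDerivation (hV : IsAlgDiffFun pd D) (p q : Fin l × ℕ) :
    ⁅hV.partialDerivation p, hV.partialDerivation q⁆ = 0 :=
  Derivation.ext fun f => sub_eq_zero.2 (hV.d_comm p.1 p.2 q.1 q.2 f)

lemma lie_partialDerivation_zero (hV : IsAlgDiffFun pd D) (j : Fin l) :
    ⁅hV.partialDerivation (j, 0), hV.totalDerivation⁆ = 0 :=
  Derivation.ext fun f => sub_eq_zero.2 (hV.comm_zero j f)

lemma lie_partialDerivation_succ (hV : IsAlgDiffFun pd D) (j : Fin l) (n : ℕ) :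
    ⁅hV.partialDerivation (j, n + 1), hV.totalDerivation⁆ = hV.partialDerivation (j, n) :=
  Derivation.ext fun f => sub_eq_iff_eq_add'.2 (hV.comm_succ j n f)

lemma iterate_quasiconstant (hV : IsAlgDiffFun pd D) {c : V} (hc : ∀ j n, D j n c = 0) (p : ℕ)
    (j : Fin l) (n : ℕ) : D j n (pd^[p] c) = 0 := by
  have pd_zero : pd 0 = 0 := hV.totalDerivation.map_zero
  induction p generalizing n with
  | zero => exact hc j n
  | succ p ih =>
    rw [Function.iterate_succ_apply']
    cases n with
    | zero => rw [hV.comm_zero, ih, pd_zero]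
    | succ n => rw [hV.comm_succ, ih, ih, pd_zero, add_zero]

/-- The evolutionary vector field `Σ_{j,n} ((λ_α + ∂)^n K_{j,i}(λ_α)) ∂/∂u_j^{(n)}` attached to the
slot `α` and the `i`-th column of `K`, acting on the coefficients of polynomials in the `λ`'s. -/
noncomputable def slotDerivation (hV : IsAlgDiffFun pd D) (N : ℕ) (Kc : Fin l → Fin l → ℕ → V)
    {k : ℕ} (α : Fin k) (i : Fin l) :
    Derivation ℤ (MvPolynomial (Fin k) V) (MvPolynomial (Fin k) V) :=
  hV.pointwiseFinite.coeffDerivation.combination fun p => kFactor pd N Kc p.2 p.1 i α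

section SlotDerivation

variable (hV : IsAlgDiffFun pd D) (N : ℕ) (Kc : Fin l → Fin l → ℕ → V) {k : ℕ}

lemma slotDerivation_apply (α : Fin k) (i : Fin l) (P : MvPolynomial (Fin k) V) :
    hV.slotDerivation N Kc α i P =
      ∑ j, ∑ᶠ n, coeffMap (D j n) P * kFactor pd N Kc n j i α := by
  have hfin := hV.pointwiseFinite.coeffDerivation.hasFiniteSupport_mul
    (fun p => kFactor pd N Kc p.2 p.1 i α) P
  rw [slotDerivation, PointwiseFinite.combination_apply, finsum_curry _ hfin,
    finsum_eq_sum_of_fintype]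
  simp only [← coeffMap_eq_coeffDerivation, coe_partialDerivation, mul_comm]

lemma rename_slotDerivation {k' : ℕ} (f : Fin k → Fin k') (α : Fin k) (i : Fin l)
    (P : MvPolynomial (Fin k) V) :
    rename f (hV.slotDerivation N Kc α i P) = hV.slotDerivation N Kc (f α) i (rename f P) := by
  simp only [slotDerivation, ← rename_kFactor pd N Kc f]
  exact PointwiseFinite.map_combination _ _ _ (fun p P => rename_coeffDerivation _ f P) _ P

lemma slotDerivation_X (α β : Fin k) (i : Fin l) :
    hV.slotDerivation N Kc α i (X β) = 0 :=
  PointwiseFinite.combination_eq_zero _ _ fun _ => coeffDerivation_X _ β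

variable {Kc} in
lemma lie_slotDerivation (hK : ∀ i j m j' n, D j' n (Kc i j m) = 0) (α β : Fin k) (a b : Fin l) :
    ⁅hV.slotDerivation N Kc α a, hV.slotDerivation N Kc β b⁆ = 0 := by
  have hconst (α : Fin k) (i : Fin l) (p q : Fin l × ℕ) :
      coeffDerivation _ (hV.partialDerivation q) (kFactor pd N Kc p.2 p.1 i α) = 0 :=
    coeffDerivation_kFactor_eq_zero _
      (fun p i j m => hV.iterate_quasiconstant (hK i j m) p q.1 q.2) p.2 p.1 i α
  refine PointwiseFinite.lie_combination_combination _ (fun p q => ?_) (hconst α a) (hconst β b)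
  rw [lie_coeffDerivation, lie_partialDerivation, coeffDerivation_zero]

lemma lie_slotDerivation_totalDerivation (α : Fin k) (i : Fin l) :
    ⁅hV.slotDerivation N Kc α i, coeffDerivation (Fin k) hV.totalDerivation⁆ =
      (X α : MvPolynomial (Fin k) V) • hV.slotDerivation N Kc α i := by
  refine PointwiseFinite.lie_combination_of_shift _ (s := Prod.map id Nat.succ)
    (Function.injective_id.prodMap Nat.succ_injective) ?_ ?_ ?_
  · rintro ⟨j, n⟩
    rw [lie_coeffDerivation]
    exact congrArg _ (hV.lie_partialDerivation_succ j n)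
  · rintro ⟨j, _ | n⟩ hq
    · rw [lie_coeffDerivation, lie_partialDerivation_zero, coeffDerivation_zero]
    · exact absurd ⟨(j, n), rfl⟩ hq
  · rintro ⟨j, n⟩
    exact kFactor_succ hV.totalDerivation N Kc n j i α

lemma deltaK_apply (P : (Fin k → Fin l) → MvPolynomial (Fin k) V) (i : Fin (k + 1) → Fin l) :
    deltaK pd D N Kc P i = ∑ α : Fin (k + 1), (-1 : ℤ) ^ (α : ℕ) •
      hV.slotDerivation N Kc α (i α)
        (rename α.succAbove (P fun b => i (α.succAbove b))) := by
  simp only [slotDerivation_apply]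
  rfl

lemma bigD_apply (P : (Fin k → Fin l) → MvPolynomial (Fin k) V) (i : Fin k → Fin l) :
    bigD pd P i = (∑ a, X a) * P i + coeffDerivation _ hV.totalDerivation (P i) := by
  rw [← coeffMap_eq_coeffDerivation]
  rfl

end SlotDerivation

lemma omegaSkew_deltaK (hV : IsAlgDiffFun pd D) (N : ℕ) (Kc : Fin l → Fin l → ℕ → V) {k : ℕ}
    {P : (Fin k → Fin l) → MvPolynomial (Fin k) V} (hP : OmegaSkew P) :
    OmegaSkew (deltaK pd D N Kc P) := by
  intro σ i
  rw [hV.deltaK_apply, hV.deltaK_apply, map_sum, Finset.smul_sum, ← Equiv.sum_comp σ fun α =>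
    (σ.sign : ℤ) • (-1 : ℤ) ^ (α : ℕ) • hV.slotDerivation N Kc α (i α) _]
  refine Finset.sum_congr rfl fun α _ => ?_
  obtain ⟨τ, hτ, hsign⟩ := exists_perm_succAbove σ α
  have hcomp : σ ∘ α.succAbove = (σ α).succAbove ∘ τ := funext hτ
  have hsign' : (-1 : ℤ) ^ (α : ℕ) * τ.sign = σ.sign * (-1) ^ (σ α : ℕ) := by
    simpa using congrArg Units.val hsign
  simp only [map_zsmul, hV.rename_slotDerivation, rename_rename, hcomp, hτ]
  rw [← rename_rename, hP τ fun b => i ((σ α).succAbove b), map_zsmul, map_zsmul, smul_smul,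
    hsign', mul_smul]

lemma deltaK_deltaK (hV : IsAlgDiffFun pd D) (N : ℕ) {Kc : Fin l → Fin l → ℕ → V}
    (hK : ∀ i j m j' n, D j' n (Kc i j m) = 0) {k : ℕ}
    (P : (Fin k → Fin l) → MvPolynomial (Fin k) V) :
    deltaK pd D N Kc (deltaK pd D N Kc P) = 0 := by
  funext i
  simp only [hV.deltaK_apply, map_sum, map_zsmul, Finset.smul_sum, rename_slotDerivation,
    rename_rename, smul_smul, ← pow_add]
  refine sum_sum_neg_one_pow_smul_eq_zero fun α β => ?_
  have hcomp : (α.succAbove β).succAbove ∘ (β.predAbove α).succAbove =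
      α.succAbove ∘ β.succAbove :=
    funext (Fin.succAbove_succAbove_succAbove_predAbove α β)
  simp only [Fin.succAbove_succAbove_succAbove_predAbove, hcomp, Fin.succAbove_succAbove_predAbove]
  rw [← sub_eq_zero, ← Derivation.commutator_apply, hV.lie_slotDerivation N hK,
    Derivation.zero_apply]

lemma deltaK_bigD (hV : IsAlgDiffFun pd D) (N : ℕ) (Kc : Fin l → Fin l → ℕ → V) {k : ℕ}
    (P : (Fin k → Fin l) → MvPolynomial (Fin k) V) :
    deltaK pd D N Kc (bigD pd P) = bigD pd (deltaK pd D N Kc P) := by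
  funext i
  rw [hV.bigD_apply, hV.deltaK_apply, hV.deltaK_apply, Finset.mul_sum, map_sum,
    ← Finset.sum_add_distrib]
  refine Finset.sum_congr rfl fun α _ => ?_
  rw [map_zsmul, mul_smul_comm, ← smul_add, hV.bigD_apply]
  congr 1
  set Q := rename α.succAbove (P fun b => i (α.succAbove b))
  set Y := hV.slotDerivation N Kc α (i α)
  have hYX : Y (∑ b, X (α.succAbove b)) = 0 := by
    rw [map_sum]
    exact Finset.sum_eq_zero fun b _ => hV.slotDerivation_X N Kc α _ (i α)
  have hYd : Y (coeffDerivation _ hV.totalDerivation Q) =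
      X α * Y Q + coeffDerivation _ hV.totalDerivation (Y Q) := by
    have h := congrArg (· Q) (hV.lie_slotDerivation_totalDerivation N Kc α (i α))
    exact sub_eq_iff_eq_add.1 h
  simp only [map_add, map_mul, map_sum (rename _), rename_X, rename_coeffDerivation]
  rw [Derivation.leibniz, hYX, smul_zero, add_zero, hYd, Fin.sum_univ_succAbove _ α, smul_eq_mul]
  ring

end IsAlgDiffFun

theorem stmt_17_general {V : Type*} [CommRing V] {l : ℕ} {pd : V → V} {D : Fin l → ℕ → V → V}
    (hV : IsAlgDiffFun pd D) (N : ℕ) (Kc : Fin l → Fin l → ℕ → V)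
    (hK : ∀ (i j : Fin l) (m : ℕ) (j' : Fin l) (n : ℕ), D j' n (Kc i j m) = 0) :
    (∀ (k : ℕ) (P : (Fin k → Fin l) → MvPolynomial (Fin k) V), OmegaSkew P →
      OmegaSkew (deltaK pd D N Kc P)) ∧
    (∀ (k : ℕ) (P : (Fin k → Fin l) → MvPolynomial (Fin k) V),
      deltaK pd D N Kc (deltaK pd D N Kc P) = 0) ∧
    (∀ (k : ℕ) (P : (Fin k → Fin l) → MvPolynomial (Fin k) V),
      deltaK pd D N Kc (bigD pd P) = bigD pd (deltaK pd D N Kc P)) := by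
  exact ⟨fun _ _ hP => hV.omegaSkew_deltaK N Kc hP, fun _ P => hV.deltaK_deltaK N hK P,
    fun _ P => hV.deltaK_bigD N Kc P⟩

/-- Let `V` be an algebra of differential functions in `ℓ < ∞` differential variables
over a field of characteristic zero, and let `K(∂)` be an `ℓ×ℓ` matrix differential
operator with quasiconstant coefficients.  Then:
(a) `δ_K` maps skewsymmetric arrays to skewsymmetric arrays and `δ_K ∘ δ_K = 0`, so
`(Ω̃^•(V), δ_K)` is a cohomology complex;
(b) `δ_K` commutes with the action of `∂` on `Ω̃^•(V)`, so it descends to the quotient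
complex `Ω^•(V) = Ω̃^•(V)/∂Ω̃^•(V)`. -/
theorem stmt_17 (V : Type*) [CommRing V] [Algebra ℚ V]
    (l : ℕ) (pd : V → V) (D : Fin l → ℕ → V → V)
    (hV : IsAlgDiffFun pd D)
    (N : ℕ) (Kc : Fin l → Fin l → ℕ → V)
    (hKquasi : ∀ (i j : Fin l) (m : ℕ) (j' : Fin l) (n : ℕ), D j' n (Kc i j m) = 0) :
    (∀ (k : ℕ) (P : (Fin k → Fin l) → MvPolynomial (Fin k) V), OmegaSkew P →
      OmegaSkew (deltaK pd D N Kc P) ∧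
      deltaK pd D N Kc (deltaK pd D N Kc P) = 0) ∧
    (∀ (k : ℕ) (P : (Fin k → Fin l) → MvPolynomial (Fin k) V), OmegaSkew P →
      deltaK pd D N Kc (bigD pd P) = bigD pd (deltaK pd D N Kc P)) := by
  obtain ⟨hskew, hsq, hcomm⟩ := stmt_17_general hV N Kc hKquasi
  exact ⟨fun k P hP => ⟨hskew k P hP, hsq k P⟩, fun k P _ => hcomm k P⟩
end
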